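/- arXiv:1207.4437 — 2 statements merged into one kernel-verified Lean document; each statement's English description precedes it below -/
import Mathlib

section
/- For every n ≥ 2, every index 1 ≤ i ≤ n−1, and all integers k_1,…,k_{i−1}, m, k_{i+2},…,k_n, the polynomial α satisfies α(n; k_1,…,k_{i−1}, m, m+1, k_{i+2},…,k_n) = α(n; k_1,…,k_{i−1}, m, m, k_{i+2},…,k_n) + α(n; k_1,…,k_{i−1}, m+1, m+1, k_{i+2},…,k_n). -/
/-- A triangular array of size `n`, encoded as a function `ℕ → ℕ → ℤ` whose
meaningful entries are `a i j` for `1 ≤ j ≤ i ≤ n` (row `i` has entries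
`a i 1, …, a i i`), normalized to be `0` outside this region. -/
def IsTri (n : ℕ) (a : ℕ → ℕ → ℤ) : Prop :=
  ∀ i j, ¬ (1 ≤ j ∧ j ≤ i ∧ i ≤ n) → a i j = 0

/-- A Monotone Triangle of size `n`: strict increase along rows and weak
increase along North-East and South-East diagonals. -/
def IsMT (n : ℕ) (a : ℕ → ℕ → ℤ) : Prop :=
  IsTri n a ∧
  (∀ i j, 1 ≤ j → j + 1 ≤ i → i ≤ n → a i j < a i (j + 1)) ∧
  (∀ i j, 1 ≤ j → j ≤ i → i + 1 ≤ n →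
    a (i + 1) j ≤ a i j ∧ a i j ≤ a (i + 1) (j + 1))

/-- A Generalized Monotone Triangle (GMT) of size `n`. -/
def IsGMT (n : ℕ) (a : ℕ → ℕ → ℤ) : Prop :=
  IsTri n a ∧
  -- (1) each entry is weakly bounded by its SW- and SE-neighbour
  (∀ i j, 1 ≤ j → j ≤ i → i + 1 ≤ n →
    min (a (i + 1) j) (a (i + 1) (j + 1)) ≤ a i j ∧
    a i j ≤ max (a (i + 1) j) (a (i + 1) (j + 1))) ∧
  -- (2) three weakly increasing consecutive entries force strict increase above
  (∀ i j, 1 ≤ j → j + 1 ≤ i → i + 1 ≤ n →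
    a (i + 1) j ≤ a (i + 1) (j + 1) → a (i + 1) (j + 1) ≤ a (i + 1) (j + 2) →
    a i j < a i (j + 1)) ∧
  -- (3) equality over a strict descent forces an equal neighbour
  (∀ i j, 1 ≤ j → j ≤ i → i + 1 ≤ n →
    (a i j = a (i + 1) j → a (i + 1) (j + 1) < a (i + 1) j →
      2 ≤ j ∧ a i (j - 1) = a i j) ∧
    (a (i + 1) (j + 1) < a (i + 1) j → a (i + 1) (j + 1) = a i j →
      j + 1 ≤ i ∧ a i (j + 1) = a i j))

/-- The bottom row of a triangular array of size `n` is `(k 0, …, k (n-1))`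
(1-indexed in the array). -/
def BottomRow (n : ℕ) (a : ℕ → ℕ → ℤ) (k : Fin n → ℤ) : Prop :=
  ∀ j : Fin n, a n (j.1 + 1) = k j

/-- The set of Monotone Triangles of size `n` with bottom row `k`. -/
def MTset (n : ℕ) (k : Fin n → ℤ) : Set (ℕ → ℕ → ℤ) :=
  {a | IsMT n a ∧ BottomRow n a k}

/-- The set `𝒢ₙ(k)` of Generalized Monotone Triangles of size `n` with bottom row `k`. -/
def GMTset (n : ℕ) (k : Fin n → ℤ) : Set (ℕ → ℕ → ℤ) :=
  {a | IsGMT n a ∧ BottomRow n a k}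

/-- The positions `(i, j)` of newcomers of a triangular array:
`a (i+1) j > a i j > a (i+1) (j+1)`. -/
def newcomersF (n : ℕ) (a : ℕ → ℕ → ℤ) : Finset (ℕ × ℕ) :=
  ((Finset.range (n + 1)) ×ˢ (Finset.range (n + 1))).filter (fun p =>
    1 ≤ p.2 ∧ p.2 ≤ p.1 ∧ p.1 + 1 ≤ n ∧
    a p.1 p.2 < a (p.1 + 1) p.2 ∧ a (p.1 + 1) (p.2 + 1) < a p.1 p.2)

/-- The positions `(i, j)` of sign-changing pairs `(a i j, a i (j+1))` of a
triangular array: two equal consecutive entries whose interlaced neighbour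
below is also equal to them. -/
def scPairsF (n : ℕ) (a : ℕ → ℕ → ℤ) : Finset (ℕ × ℕ) :=
  ((Finset.range (n + 1)) ×ˢ (Finset.range (n + 1))).filter (fun p =>
    1 ≤ p.2 ∧ p.2 + 1 ≤ p.1 ∧ p.1 + 1 ≤ n ∧
    a p.1 p.2 = a p.1 (p.2 + 1) ∧ a (p.1 + 1) (p.2 + 1) = a p.1 p.2)

/-- `sc(A)`: the total number of newcomers and sign-changing pairs of `A`. -/
def scT (n : ℕ) (a : ℕ → ℕ → ℤ) : ℕ :=
  (newcomersF n a).card + (scPairsF n a).card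

/-- `IsAlpha N f` asserts that `f` is the polynomial function
`α(N; k₁, …, k_N)`: it is given by a polynomial with rational coefficients of
degree at most `N - 1` in each variable, and its value at every strictly
increasing integer sequence equals the number of Monotone Triangles with that
bottom row. -/
def IsAlpha (N : ℕ) (f : (Fin N → ℤ) → ℚ) : Prop :=
  (∃ P : MvPolynomial (Fin N) ℚ, (∀ i : Fin N, P.degreeOf i ≤ N - 1) ∧
    ∀ k : Fin N → ℤ, f k = MvPolynomial.eval (fun i => (k i : ℚ)) P) ∧
  (∀ k : Fin N → ℤ, StrictMono k → f k = ((MTset N k).ncard : ℚ))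

/-- The signed sum of `f` over the integers `x` with `a ≤ x < b`. -/
noncomputable def signedSum (f : ℤ → ℚ) (a b : ℤ) : ℚ :=
  ∑ x ∈ Finset.Ico a b, f x - ∑ x ∈ Finset.Ico b a, f x

lemma signedSum_self (f : ℤ → ℚ) (a : ℤ) : signedSum f a a = 0 := by
  simp [signedSum]

lemma signedSum_symm (f : ℤ → ℚ) (a b : ℤ) : signedSum f a b = -signedSum f b a := by
  simp [signedSum]

lemma signedSum_add (f g : ℤ → ℚ) (a b : ℤ) :
    signedSum (fun x => f x + g x) a b = signedSum f a b + signedSum g a b := by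
  simp only [signedSum, Finset.sum_add_distrib]
  ring

lemma signedSum_succ_right (f : ℤ → ℚ) (a b : ℤ) :
    signedSum f a (b + 1) = signedSum f a b + f b := by
  unfold signedSum
  rcases le_or_gt a b with h | h
  · have h₁ : Finset.Ico a (b + 1) = insert b (Finset.Ico a b) := by
      ext x; simp only [Finset.mem_Ico, Finset.mem_insert]; omega
    rw [h₁, Finset.sum_insert (by simp), Finset.Ico_eq_empty_of_le h,
      Finset.Ico_eq_empty_of_le (show a ≤ b + 1 by omega)]
    simp [add_comm]
  · have h₁ : Finset.Ico b a = insert b (Finset.Ico (b + 1) a) := by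
      ext x; simp only [Finset.mem_Ico, Finset.mem_insert]; omega
    rw [h₁, Finset.sum_insert (by simp), Finset.Ico_eq_empty_of_le h.le,
      Finset.Ico_eq_empty_of_le (show b + 1 ≤ a by omega)]
    simp

lemma signedSum_succ_left (f : ℤ → ℚ) (a b : ℤ) :
    signedSum f (a + 1) b = signedSum f a b - f a := by
  rw [signedSum_symm, signedSum_succ_right, signedSum_symm f a b]
  ring

lemma signedSum_telescope (f F : ℤ → ℚ) (h : ∀ x, F (x + 1) - F x = f x) (a b : ℤ) :
    signedSum f a b = F b - F a := by
  induction b using Int.inductionOn' (b := a) with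
  | zero => simp [signedSum_self]
  | succ k _ ih => rw [signedSum_succ_right, ih, ← h]; ring
  | pred k _ ih =>
    have h₁ := signedSum_succ_right f a (k - 1)
    have h₂ := h (k - 1)
    rw [sub_add_cancel] at h₁ h₂
    linarith

/-- The polynomial extension, to arbitrary integer sequences `k`, of the sum of `A l` over all
strictly increasing sequences `l` interlacing the strictly increasing sequence `k`. -/
noncomputable def interlacingSum : List ℤ → (List ℤ → ℚ) → ℚ
  | [], _ => 0
  | [_], A => A []
  | a :: b :: r, A =>
    signedSum (fun x => interlacingSum (b :: r) (fun l => A (x :: l))) a b +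
      interlacingSum ((b + 1) :: r) (fun l => A (b :: l))
termination_by k => k.length

lemma interlacingSum_singleton (a : ℤ) (A : List ℤ → ℚ) : interlacingSum [a] A = A [] := by
  rw [interlacingSum]

lemma interlacingSum_cons_cons (a b : ℤ) (r : List ℤ) (A : List ℤ → ℚ) :
    interlacingSum (a :: b :: r) A =
      signedSum (fun x => interlacingSum (b :: r) (fun l => A (x :: l))) a b +
        interlacingSum ((b + 1) :: r) (fun l => A (b :: l)) := by
  rw [interlacingSum]

lemma interlacingSum_zero (k : List ℤ) : interlacingSum k (fun _ => 0) = 0 := by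
  match k with
  | [] => rw [interlacingSum]
  | [_] => rw [interlacingSum]
  | a :: b :: r =>
    rw [interlacingSum_cons_cons, interlacingSum_zero (b :: r), interlacingSum_zero ((b + 1) :: r)]
    simp [signedSum]
termination_by k.length

/-- `A` vanishes on sequences with three equal consecutive entries. -/
def VanishesOnTriples (A : List ℤ → ℚ) : Prop :=
  ∀ (u v : List ℤ) (m : ℤ), A (u ++ m :: m :: m :: v) = 0

/-- The identity `A(…, m, m+1, …) = A(…, m, m, …) + A(…, m+1, m+1, …)` at all positions. -/
def PairIdentity (A : List ℤ → ℚ) : Prop :=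
  ∀ (u v : List ℤ) (m : ℤ), A (u ++ m :: (m + 1) :: v) =
    A (u ++ m :: m :: v) + A (u ++ (m + 1) :: (m + 1) :: v)

lemma VanishesOnTriples.cons {A : List ℤ → ℚ} (hA : VanishesOnTriples A) (x : ℤ) :
    VanishesOnTriples (fun l => A (x :: l)) :=
  fun u v m => hA (x :: u) v m

lemma interlacingSum_self_cons (m : ℤ) (v : List ℤ) (A : List ℤ → ℚ) :
    interlacingSum (m :: m :: v) A = interlacingSum ((m + 1) :: v) (fun l => A (m :: l)) := by
  rw [interlacingSum_cons_cons, signedSum_self, zero_add]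

lemma interlacingSum_pair (m : ℤ) (v : List ℤ) (A : List ℤ → ℚ) :
    interlacingSum (m :: (m + 1) :: v) A =
      interlacingSum (m :: m :: v) A + interlacingSum ((m + 1) :: (m + 1) :: v) A := by
  rw [interlacingSum_self_cons, interlacingSum_self_cons, interlacingSum_cons_cons,
    signedSum_succ_right, signedSum_self, zero_add]

lemma interlacingSum_descent {A : List ℤ → ℚ} (m : ℤ) (v : List ℤ)
    (hA : ∀ l, A (m :: m :: l) = 0) : interlacingSum ((m + 1) :: m :: v) A = 0 := by
  rw [interlacingSum_cons_cons, signedSum_succ_left, signedSum_self]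
  cases v with
  | nil => simp [interlacingSum_singleton]
  | cons c w =>
    rw [interlacingSum_cons_cons m, interlacingSum_cons_cons (m + 1), signedSum_succ_left]
    simp only [hA, interlacingSum_zero]
    ring

lemma PairIdentity.interlacingSum {A : List ℤ → ℚ} (hA : VanishesOnTriples A) :
    PairIdentity (fun k => interlacingSum k A) := by
  intro u v m
  match u with
  | [] => exact interlacingSum_pair m v A
  | [a] =>
    have h₁ : _root_.interlacingSum ((m + 1) :: m :: v) (fun l => A (m :: l)) = 0 :=
      interlacingSum_descent m v fun l => hA [] l m
    have h₂ : _root_.interlacingSum ((m + 1 + 1) :: (m + 1) :: v) (fun l => A ((m + 1) :: l)) = 0 :=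
      interlacingSum_descent (m + 1) v fun l => hA [] l (m + 1)
    simp only [List.cons_append, List.nil_append]
    rw [interlacingSum_cons_cons a m, interlacingSum_cons_cons a m,
      interlacingSum_cons_cons a (m + 1), h₁, h₂, signedSum_succ_right]
    simp only [interlacingSum_pair, signedSum_add]
    ring
  | a :: b :: u =>
    simp only [List.cons_append]
    rw [interlacingSum_cons_cons, interlacingSum_cons_cons, interlacingSum_cons_cons]
    have h₁ := fun x => PairIdentity.interlacingSum (hA.cons x) (b :: u) v m
    have h₂ := PairIdentity.interlacingSum (hA.cons b) ((b + 1) :: u) v m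
    simp only [List.cons_append] at h₁ h₂
    simp only [h₁, h₂, signedSum_add]
    ring
termination_by u => u.length

/-- `A` is given by a polynomial in the entries on sequences of each fixed length. -/
def IsPolynomialOnLists (A : List ℤ → ℚ) : Prop :=
  ∀ l : List ℕ, ∃ P : MvPolynomial ℕ ℚ, ∀ e : ℕ → ℤ,
    A (l.map e) = MvPolynomial.eval (fun i => (e i : ℚ)) P

/-- Restricting to a polynomial curve yields a one-variable polynomial. -/
lemma IsPolynomialOnLists.exists_polynomial {A : List ℤ → ℚ} (hA : IsPolynomialOnLists A)
    (q : List (Polynomial ℤ)) :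
    ∃ Q : Polynomial ℚ, ∀ m : ℤ, A (q.map (Polynomial.eval m)) = Q.eval (m : ℚ) := by
  obtain ⟨P, hP⟩ := hA (List.range q.length)
  refine ⟨MvPolynomial.aeval (fun i => (q.getD i 0).map (Int.castRingHom ℚ)) P, fun m => ?_⟩
  have h₁ : q.map (Polynomial.eval m) =
      (List.range q.length).map (fun i => (q.getD i 0).eval m) := by
    apply List.ext_getElem
    · simp
    · intro i h _
      simp at h
      simp [h]
  rw [h₁, hP, ← Polynomial.coe_evalRingHom (m : ℚ), MvPolynomial.map_aeval]
  have h₂ : (Polynomial.evalRingHom (m : ℚ)).comp (algebraMap ℚ (Polynomial ℚ)) = RingHom.id ℚ := by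
    ext; simp
  rw [h₂]
  simp only [Polynomial.coe_evalRingHom, Polynomial.eval_intCast_map, MvPolynomial.eval,
    eq_intCast, Int.cast_id]

lemma Polynomial.eq_zero_of_forall_intCast_ge {Q : Polynomial ℚ} (c : ℤ)
    (h : ∀ m : ℤ, c ≤ m → Q.eval (m : ℚ) = 0) : Q = 0 := by
  refine Q.eq_zero_of_infinite_isRoot (Set.Infinite.mono ?_
    ((Set.Ici_infinite c).image (Int.cast_injective (α := ℚ)).injOn))
  rintro _ ⟨m, hm, rfl⟩
  exact h m hm

/-- A polynomial function that changes sign under a unit shift vanishes. -/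
lemma Polynomial.eval_eq_zero_of_antiperiodic {Q : Polynomial ℚ}
    (h : ∀ m : ℤ, Q.eval (m : ℚ) + Q.eval ((m + 1 : ℤ) : ℚ) = 0) : Q = 0 := by
  have h₂ : ∀ j : ℕ, Q.eval ((2 * j : ℤ) : ℚ) = Q.eval 0 := by
    intro j
    induction j with
    | zero => simp
    | succ j ih =>
      have h₃ := h (2 * j)
      have h₄ := h (2 * j + 1)
      have h₅ : (2 * ((j + 1 : ℕ) : ℤ)) = 2 * j + 1 + 1 := by push_cast; ring
      rw [h₅]
      linarith
  have hQ : Q - Polynomial.C (Q.eval 0) = 0 := by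
    refine Polynomial.eq_zero_of_infinite_isRoot _ (Set.Infinite.mono ?_
      (Set.infinite_range_of_injective (f := fun j : ℕ => ((2 * j : ℤ) : ℚ)) ?_))
    · rintro _ ⟨j, rfl⟩
      simpa [Polynomial.IsRoot, sub_eq_zero] using h₂ j
    · intro i j hij
      simpa using hij
  have hC := sub_eq_zero.mp hQ
  have h₀ := h 0
  rw [hC] at h₀
  simp only [Polynomial.eval_C] at h₀
  rw [hC, show Q.eval 0 = 0 by linarith, Polynomial.C_0]

lemma PairIdentity.vanishesOnTriples {A : List ℤ → ℚ} (hA : PairIdentity A)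
    (hP : IsPolynomialOnLists A) : VanishesOnTriples A := by
  intro u v m
  obtain ⟨Q, hQ⟩ := hP.exists_polynomial (u.map Polynomial.C ++
    Polynomial.X :: Polynomial.X :: Polynomial.X :: v.map Polynomial.C)
  simp only [List.map_append, List.map_cons, List.map_map, Polynomial.eval_X,
    Function.comp_def, Polynomial.eval_C, List.map_id'] at hQ
  rw [hQ, Polynomial.eval_eq_zero_of_antiperiodic (Q := Q), Polynomial.eval_zero]
  intro m
  rw [← hQ, ← hQ]
  have h₁ := hA (u ++ [m]) v m
  have h₂ := hA u ((m + 1) :: v) m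
  simp only [List.append_assoc, List.cons_append, List.nil_append] at h₁
  linarith

/-- Every multivariate polynomial has a discrete antiderivative in each variable. -/
lemma MvPolynomial.exists_antidifference (i : ℕ) (P : MvPolynomial ℕ ℚ) :
    ∃ P' : MvPolynomial ℕ ℚ, ∀ (e : ℕ → ℚ) (x : ℚ),
      MvPolynomial.eval (Function.update e i (x + 1)) P' -
        MvPolynomial.eval (Function.update e i x) P' =
      MvPolynomial.eval (Function.update e i x) P := by
  suffices h : ∀ k : ℕ, ∃ P' : MvPolynomial ℕ ℚ, ∀ (e : ℕ → ℚ) (x : ℚ),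
      MvPolynomial.eval (Function.update e i (x + 1)) P' -
        MvPolynomial.eval (Function.update e i x) P' =
      MvPolynomial.eval (Function.update e i x) P * x ^ k by
    simpa using h 0
  induction P using MvPolynomial.induction_on with
  | C c =>
    intro k
    refine ⟨MvPolynomial.C (c / (k + 1)) *
      Polynomial.aeval (MvPolynomial.X i) (Polynomial.bernoulli (k + 1)), fun e x => ?_⟩
    have h₁ : ∀ y : ℚ, MvPolynomial.eval (Function.update e i y)
        (Polynomial.aeval (MvPolynomial.X i) (Polynomial.bernoulli (k + 1))) =
        (Polynomial.bernoulli (k + 1)).eval y := by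
      intro y
      rw [← MvPolynomial.coe_aeval_eq_eval, RingHom.coe_coe, ← Polynomial.aeval_algHom_apply]
      simp
    have h₂ := Polynomial.bernoulli_eval_one_add (k + 1) x
    simp only [map_mul, MvPolynomial.eval_C, h₁]
    rw [add_comm x 1, h₂]
    have : (k : ℚ) + 1 ≠ 0 := by positivity
    push_cast
    field_simp
    simp [mul_assoc]
  | add P₁ P₂ h₁ h₂ =>
    intro k
    obtain ⟨Q₁, hQ₁⟩ := h₁ k
    obtain ⟨Q₂, hQ₂⟩ := h₂ k
    refine ⟨Q₁ + Q₂, fun e x => ?_⟩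
    simp only [map_add, add_mul, ← hQ₁, ← hQ₂]
    ring
  | mul_X P j h =>
    intro k
    rcases eq_or_ne j i with rfl | hj
    · obtain ⟨Q, hQ⟩ := h (k + 1)
      refine ⟨Q, fun e x => ?_⟩
      rw [hQ]
      simp
      ring
    · obtain ⟨Q, hQ⟩ := h k
      refine ⟨Q * MvPolynomial.X j, fun e x => ?_⟩
      simp only [map_mul, MvPolynomial.eval_X, Function.update_of_ne hj]
      rw [← sub_mul, hQ]
      ring

lemma Function.update_intCast (e : ℕ → ℤ) (i : ℕ) (x : ℤ) :
    (fun j => ((Function.update e i x j : ℤ) : ℚ)) =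
      Function.update (fun j => (e j : ℚ)) i (x : ℚ) := by
  ext j
  rcases eq_or_ne j i with rfl | h <;> simp [*]

lemma MvPolynomial.eval_update_bind₁ (e : ℕ → ℚ) (i : ℕ) (g P : MvPolynomial ℕ ℚ) :
    MvPolynomial.eval e (MvPolynomial.bind₁ (Function.update MvPolynomial.X i g) P) =
      MvPolynomial.eval (Function.update e i (MvPolynomial.eval e g)) P := by
  rw [← MvPolynomial.coe_aeval_eq_eval, ← MvPolynomial.coe_aeval_eq_eval, RingHom.coe_coe,
    RingHom.coe_coe, MvPolynomial.aeval_bind₁]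
  congr 2
  ext j
  rcases eq_or_ne j i with rfl | h <;> simp [*]

lemma List.map_update_of_notMem (e : ℕ → ℤ) {i : ℕ} (x : ℤ) {l : List ℕ} (h : i ∉ l) :
    l.map (Function.update e i x) = l.map e := by
  refine List.map_congr_left fun j hj => Function.update_of_ne ?_ _ _
  rintro rfl
  exact h hj

lemma IsPolynomialOnLists.interlacingSum_append {A : List ℤ → ℚ} (hA : IsPolynomialOnLists A)
    (l p : List ℕ) : ∃ P : MvPolynomial ℕ ℚ, ∀ e : ℕ → ℤ,
      _root_.interlacingSum (l.map e) (fun t => A (p.map e ++ t)) =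
        MvPolynomial.eval (fun i => (e i : ℚ)) P := by
  match l with
  | [] => exact ⟨0, fun e => by simp [interlacingSum]⟩
  | [a] =>
    obtain ⟨P, hP⟩ := hA p
    exact ⟨P, fun e => by simp [interlacingSum, hP]⟩
  | a :: b :: r =>
    obtain ⟨i, hi⟩ := Infinite.exists_notMem_finset (p ++ b :: r).toFinset
    have hip : i ∉ p := by simp at hi; tauto
    have hir : i ∉ r := by simp at hi; tauto
    have hib : b ≠ i := by rintro rfl; simp at hi
    obtain ⟨P₁, hP₁⟩ := hA.interlacingSum_append (b :: r) (p ++ [i])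
    obtain ⟨P₂, hP₂⟩ := hA.interlacingSum_append (i :: r) (p ++ [b])
    obtain ⟨F, hF⟩ := MvPolynomial.exists_antidifference i P₁
    refine ⟨MvPolynomial.bind₁ (Function.update MvPolynomial.X i (MvPolynomial.X b)) F -
      MvPolynomial.bind₁ (Function.update MvPolynomial.X i (MvPolynomial.X a)) F +
      MvPolynomial.bind₁ (Function.update MvPolynomial.X i (MvPolynomial.X b + 1)) P₂,
      fun e => ?_⟩
    simp only [map_add, map_sub, MvPolynomial.eval_update_bind₁, MvPolynomial.eval_X, map_one]
    simp only [List.map_cons]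
    rw [interlacingSum_cons_cons]
    congr 1
    · refine signedSum_telescope _ (fun x => MvPolynomial.eval
        (Function.update (fun j => (e j : ℚ)) i (x : ℚ)) F) (fun x => ?_) _ _
      push_cast
      rw [hF, ← Function.update_intCast, ← hP₁]
      simp [List.map_update_of_notMem, hip, hir, hib]
    · have h := hP₂ (Function.update e i (e b + 1))
      rw [Function.update_intCast] at h
      push_cast at h
      rw [← h]
      simp [List.map_update_of_notMem, hip, hir, hib]
termination_by l.length

lemma IsPolynomialOnLists.interlacingSum {A : List ℤ → ℚ} (hA : IsPolynomialOnLists A) :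
    IsPolynomialOnLists (fun k => interlacingSum k A) :=
  fun l => by simpa using hA.interlacingSum_append l []

/-- The polynomials `α(n; ·)`, as functions on lists of length `n`. -/
noncomputable def alphaList : ℕ → List ℤ → ℚ
  | 0, k => if k = [] then 1 else 0
  | n + 1, k => interlacingSum k (alphaList n)

lemma alphaList_isPolynomialOnLists (n : ℕ) : IsPolynomialOnLists (alphaList n) := by
  induction n with
  | zero => exact fun l => ⟨if l = [] then 1 else 0, fun e => by
      by_cases h : l = [] <;> simp [alphaList, h]⟩
  | succ n ih => exact ih.interlacingSum

lemma alphaList_vanishesOnTriples (n : ℕ) : VanishesOnTriples (alphaList n) := by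
  induction n with
  | zero => intro u v m; simp [alphaList]
  | succ n ih =>
    exact (PairIdentity.interlacingSum ih).vanishesOnTriples (alphaList_isPolynomialOnLists (n + 1))

lemma alphaList_succ_pairIdentity (n : ℕ) : PairIdentity (alphaList (n + 1)) :=
  PairIdentity.interlacingSum (alphaList_vanishesOnTriples n)

/-- `l` is a strictly increasing sequence interlacing `k`. -/
def Interlaces (k l : List ℤ) : Prop :=
  l.length + 1 = k.length ∧
  (∀ j < l.length, k.getD j 0 ≤ l.getD j 0 ∧ l.getD j 0 ≤ k.getD (j + 1) 0) ∧
  (∀ j, j + 1 < l.length → l.getD j 0 < l.getD (j + 1) 0)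

lemma interlaces_cons_cons_iff (a b x : ℤ) (r l : List ℤ) :
    Interlaces (a :: b :: r) (x :: l) ↔
      a ≤ x ∧ x ≤ b ∧ (0 < l.length → x < l.getD 0 0) ∧ Interlaces (b :: r) l := by
  constructor
  · rintro ⟨h₁, h₂, h₃⟩
    have h₀ := h₂ 0 (by simp)
    simp only [List.getD_cons_zero, List.getD_cons_succ] at h₀
    refine ⟨h₀.1, h₀.2, fun h => ?_, by simpa using h₁, fun j hj => ?_, fun j hj => ?_⟩
    · simpa using h₃ 0 (by simpa using h)
    · simpa using h₂ (j + 1) (by simpa using hj)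
    · simpa using h₃ (j + 1) (by simpa using hj)
  · rintro ⟨h₁, h₂, h₃, h₄, h₅, h₆⟩
    refine ⟨by simpa using h₄, fun j hj => ?_, fun j hj => ?_⟩
    · cases j with
      | zero => simpa using ⟨h₁, h₂⟩
      | succ j => simpa using h₅ j (by simpa using hj)
    · cases j with
      | zero => simpa using h₃ (by simpa using hj)
      | succ j => simpa using h₆ j (by simpa using hj)

lemma interlaces_succ_cons_iff (b : ℤ) (r l : List ℤ) :
    Interlaces ((b + 1) :: r) l ↔
      (0 < l.length → b < l.getD 0 0) ∧ Interlaces (b :: r) l := by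
  constructor
  · rintro ⟨h₁, h₂, h₃⟩
    refine ⟨fun h => by simpa [Int.add_one_le_iff] using (h₂ 0 h).1, by simpa using h₁,
      fun j hj => ?_, h₃⟩
    cases j with
    | zero =>
      have h := h₂ 0 hj
      simp only [List.getD_cons_zero, List.getD_cons_succ] at h ⊢
      omega
    | succ j => simpa using h₂ (j + 1) hj
  · rintro ⟨h₀, h₁, h₂, h₃⟩
    refine ⟨by simpa using h₁, fun j hj => ?_, h₃⟩
    cases j with
    | zero =>
      have h := h₂ 0 hj
      have h' := h₀ hj
      simp only [List.getD_cons_zero, List.getD_cons_succ] at h ⊢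
      omega
    | succ j => simpa using h₂ (j + 1) hj

/-- The strictly increasing sequences interlacing a given one. -/
noncomputable def interlacers : List ℤ → Finset (List ℤ)
  | [] => ∅
  | [_] => {[]}
  | a :: b :: r =>
    (Finset.Ico a b).biUnion (fun x => (interlacers (b :: r)).image (x :: ·)) ∪
      (interlacers ((b + 1) :: r)).image (b :: ·)
termination_by k => k.length

lemma mem_interlacers (k : List ℤ) (hk : k.IsChain (· ≤ ·)) (hk' : k.tail.IsChain (· < ·))
    (l : List ℤ) : l ∈ interlacers k ↔ Interlaces k l := by
  match k with
  | [] => simp [interlacers, Interlaces]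
  | [a] =>
    rw [interlacers, Finset.mem_singleton]
    constructor
    · rintro rfl
      simp [Interlaces]
    · exact fun h => by simpa using h.1
  | a :: b :: r =>
    have hab : a ≤ b := (List.isChain_cons_cons.1 hk).1
    rw [List.tail_cons] at hk'
    have ih₁ := mem_interlacers (b :: r) (List.isChain_cons_cons.1 hk).2 hk'.tail
    have ih₂ := mem_interlacers ((b + 1) :: r) (by
      cases r with
      | nil => simp
      | cons c w =>
        exact List.isChain_cons_cons.2 ⟨(List.isChain_cons_cons.1 hk').1,
          (List.isChain_cons_cons.1 (List.isChain_cons_cons.1 hk).2).2⟩) hk'.tail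
    rw [interlacers]
    cases l with
    | nil => simp [Interlaces]
    | cons x l =>
      simp only [Finset.mem_union, Finset.mem_biUnion, Finset.mem_Ico, Finset.mem_image,
        List.cons.injEq, ih₁, ih₂, interlaces_succ_cons_iff, interlaces_cons_cons_iff]
      constructor
      · rintro (⟨y, hy, l', h, rfl, rfl⟩ | ⟨l', h, rfl, rfl⟩)
        · refine ⟨hy.1, hy.2.le, fun h₀ => ?_, h⟩
          have := (h.2.1 0 h₀).1
          rw [List.getD_cons_zero] at this
          omega
        · exact ⟨hab, le_rfl, h.1, h.2⟩
      · rintro ⟨h₁, h₂, h₃, h₄⟩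
        rcases h₂.lt_or_eq with h | rfl
        · exact Or.inl ⟨x, ⟨h₁, h⟩, l, h₄, rfl, rfl⟩
        · exact Or.inr ⟨l, ⟨h₃, h₄⟩, rfl, rfl⟩
termination_by k.length

lemma interlacingSum_eq_sum (k : List ℤ) (hk : k.IsChain (· ≤ ·)) (hk' : k.tail.IsChain (· < ·))
    (A : List ℤ → ℚ) : interlacingSum k A = ∑ l ∈ interlacers k, A l := by
  match k with
  | [] => simp [interlacers, interlacingSum]
  | [a] => simp [interlacers, interlacingSum]
  | a :: b :: r =>
    have hab : a ≤ b := (List.isChain_cons_cons.1 hk).1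
    rw [List.tail_cons] at hk'
    have ih₁ := interlacingSum_eq_sum (b :: r) (List.isChain_cons_cons.1 hk).2 hk'.tail
    have ih₂ := interlacingSum_eq_sum ((b + 1) :: r) (by
      cases r with
      | nil => simp
      | cons c w =>
        exact List.isChain_cons_cons.2 ⟨(List.isChain_cons_cons.1 hk').1,
          (List.isChain_cons_cons.1 (List.isChain_cons_cons.1 hk).2).2⟩) hk'.tail
    rw [interlacers, interlacingSum_cons_cons, Finset.sum_union, Finset.sum_biUnion,
      Finset.sum_image (by simp), signedSum, Finset.Ico_eq_empty_of_le hab, Finset.sum_empty,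
      sub_zero, ih₂]
    · simp only [ih₁]
      congr 1
      exact Finset.sum_congr rfl fun x _ => (Finset.sum_image (by simp)).symm
    · intro x _ y _ hxy
      rw [Function.onFun, Finset.disjoint_left]
      simp only [Finset.mem_image]
      rintro _ ⟨l, _, rfl⟩ ⟨l', _, h⟩
      exact hxy (List.cons.inj h).1.symm
    · rw [Finset.disjoint_left]
      simp only [Finset.mem_image, Finset.mem_biUnion, Finset.mem_Ico]
      rintro _ ⟨x, hx, l, _, rfl⟩ ⟨l', _, h⟩
      have := (List.cons.inj h).1
      omega
termination_by k.length

/-- Append the row `k` below a triangular array of size `n`. -/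
def appendRow (n : ℕ) (k : List ℤ) (a : ℕ → ℕ → ℤ) (i j : ℕ) : ℤ :=
  if i = n + 1 then (if 1 ≤ j ∧ j ≤ n + 1 then k.getD (j - 1) 0 else 0) else a i j

lemma appendRow_bottom {n j : ℕ} (hj : j < n + 1) (k : List ℤ) (a : ℕ → ℕ → ℤ) :
    appendRow n k a (n + 1) (j + 1) = k.getD j 0 := by
  rw [appendRow, if_pos rfl, if_pos (by omega), Nat.add_sub_cancel]

lemma appendRow_of_ne {n i : ℕ} (hi : i ≠ n + 1) (k : List ℤ) (a : ℕ → ℕ → ℤ) (j : ℕ) :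
    appendRow n k a i j = a i j :=
  if_neg hi

/-- `a` is a Monotone Triangle of size `n` with bottom row `k`. -/
def IsMTOver (n : ℕ) (k : List ℤ) (a : ℕ → ℕ → ℤ) : Prop :=
  IsMT n a ∧ ∀ j < n, a n (j + 1) = k.getD j 0

lemma IsMTOver.appendRow {n : ℕ} {k l : List ℤ} {a : ℕ → ℕ → ℤ} (hn : k.length = n + 1)
    (hk : k.IsChain (· < ·)) (hl : Interlaces k l) (ha : IsMTOver n l a) :
    IsMTOver (n + 1) k (appendRow n k a) := by
  obtain ⟨⟨h₁, h₂, h₃⟩, h₄⟩ := ha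
  obtain ⟨hl₁, hl₂, hl₃⟩ := hl
  refine ⟨⟨fun i j hij => ?_, fun i j hj hji hi => ?_, fun i j hj hji hi => ?_⟩, fun j hj => ?_⟩
  · unfold _root_.appendRow
    split_ifs
    · omega
    · rfl
    · exact h₁ i j (by omega)
  · unfold _root_.appendRow
    split_ifs with h
    · obtain ⟨j, rfl⟩ : ∃ t, j = t + 1 := ⟨j - 1, by omega⟩
      have := List.isChain_iff_getElem.1 hk j (by omega)
      rw [Nat.add_sub_cancel, Nat.add_sub_cancel, List.getD_eq_getElem _ _ (by omega),
        List.getD_eq_getElem _ _ (by omega)]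
      exact this
    all_goals first | omega | exact h₂ i j hj hji (by omega)
  · rcases Nat.lt_or_ge i n with h | h
    · simp only [appendRow_of_ne (show i + 1 ≠ n + 1 by omega),
        appendRow_of_ne (show i ≠ n + 1 by omega)]
      exact h₃ i j hj hji (by omega)
    · obtain rfl : i = n := by omega
      obtain ⟨j, rfl⟩ : ∃ t, j = t + 1 := ⟨j - 1, by omega⟩
      rw [appendRow_bottom (by omega), appendRow_bottom (by omega),
        appendRow_of_ne (by omega), h₄ j (by omega)]
      exact hl₂ j (by omega)
  · exact appendRow_bottom hj k a

lemma IsMTOver.exists_appendRow {n : ℕ} {k : List ℤ} {a : ℕ → ℕ → ℤ} (hn : k.length = n + 1)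
    (ha : IsMTOver (n + 1) k a) :
    ∃ l b, Interlaces k l ∧ IsMTOver n l b ∧ _root_.appendRow n k b = a := by
  obtain ⟨⟨h₁, h₂, h₃⟩, h₄⟩ := ha
  have hl : ∀ j < n, ((List.range n).map fun j => a n (j + 1)).getD j 0 = a n (j + 1) := by
    intro j hj
    simp [hj]
  refine ⟨(List.range n).map fun j => a n (j + 1), fun i j => if i = n + 1 then 0 else a i j,
    ⟨by simp [hn], fun j hj => ?_, fun j hj => ?_⟩,
    ⟨⟨fun i j hij => ?_, fun i j hj hji hi => ?_, fun i j hj hji hi => ?_⟩, fun j hj => ?_⟩, ?_⟩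
  · rw [List.length_map, List.length_range] at hj
    rw [hl j hj, ← h₄ j (by omega), ← h₄ (j + 1) (by omega)]
    exact h₃ n (j + 1) (by omega) (by omega) le_rfl
  · rw [List.length_map, List.length_range] at hj
    rw [hl j (by omega), hl (j + 1) hj]
    exact h₂ n (j + 1) (by omega) (by omega) (by omega)
  · by_cases h : i = n + 1
    · simp [h]
    · simpa [h] using h₁ i j (by omega)
  · simpa [show i ≠ n + 1 by omega] using h₂ i j hj hji (by omega)
  · simpa [show i ≠ n + 1 by omega, show i ≠ n by omega] using h₃ i j hj hji (by omega)
  · simp [hj]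
  · ext i j
    unfold _root_.appendRow
    split_ifs with h h'
    · obtain ⟨j, rfl⟩ : ∃ t, j = t + 1 := ⟨j - 1, by omega⟩
      rw [h, h₄ j (by omega), Nat.add_sub_cancel]
    · exact (h₁ i j (by omega)).symm
    · exact if_neg h

lemma IsMTOver.appendRow_injective {n : ℕ} {k l l' : List ℤ} {a a' : ℕ → ℕ → ℤ}
    (ha : IsMTOver n l a) (ha' : IsMTOver n l' a')
    (h : _root_.appendRow n k a = _root_.appendRow n k a') : a = a' := by
  ext i j
  by_cases hi : i = n + 1
  · rw [ha.1.1 i j (by omega), ha'.1.1 i j (by omega)]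
  · simpa [_root_.appendRow, hi] using congrFun (congrFun h i) j

lemma IsMTOver.row_unique {n : ℕ} {l l' : List ℤ} {a : ℕ → ℕ → ℤ} (hl : l.length = n)
    (hl' : l'.length = n) (ha : IsMTOver n l a) (ha' : IsMTOver n l' a) : l = l' := by
  refine List.ext_getElem (by omega) fun j h h' => ?_
  rw [← List.getD_eq_getElem _ 0 h, ← List.getD_eq_getElem _ 0 h', ← ha.2 j (by omega),
    ha'.2 j (by omega)]

lemma Interlaces.isChain {k l : List ℤ} (h : Interlaces k l) : l.IsChain (· < ·) := by
  refine List.isChain_iff_getElem.2 fun j hj => ?_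
  have := h.2.2 j hj
  rwa [List.getD_eq_getElem _ _ (by omega), List.getD_eq_getElem _ _ (by omega)] at this

/-- `alphaList` counts Monotone Triangles with strictly increasing bottom row. -/
lemma exists_finset_card_eq_alphaList (n : ℕ) (k : List ℤ) (hn : k.length = n)
    (hk : k.IsChain (· < ·)) :
    ∃ F : Finset (ℕ → ℕ → ℤ), (∀ a, a ∈ F ↔ IsMTOver n k a) ∧ (F.card : ℚ) = alphaList n k := by
  classical
  induction n generalizing k with
  | zero =>
    refine ⟨{0}, fun a => ?_, by simp [alphaList, List.length_eq_zero_iff.1 hn]⟩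
    rw [Finset.mem_singleton]
    constructor
    · rintro rfl
      exact ⟨⟨fun _ _ _ => rfl, by omega, by omega⟩, by omega⟩
    · rintro ⟨⟨h, _⟩, _⟩
      ext i j
      exact h i j (by omega)
  | succ n ih =>
    have hk₁ : k.IsChain (· ≤ ·) := hk.imp fun _ _ h => h.le
    have hmem := mem_interlacers k hk₁ hk.tail
    have hlen : ∀ l ∈ interlacers k, l.length = n := fun l hl => by
      have := ((hmem l).1 hl).1
      omega
    choose! F hF hFcard using ih
    refine ⟨(interlacers k).biUnion fun l => (F l).image (appendRow n k), fun a => ?_, ?_⟩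
    · simp only [Finset.mem_biUnion, Finset.mem_image]
      constructor
      · rintro ⟨l, hl, b, hb, rfl⟩
        have hI := (hmem l).1 hl
        exact ((hF l (hlen l hl) hI.isChain b).1 hb).appendRow hn hk hI
      · intro ha
        obtain ⟨l, b, hI, hb, rfl⟩ := ha.exists_appendRow hn
        have hl := (hmem l).2 hI
        exact ⟨l, hl, b, (hF l (hlen l hl) hI.isChain b).2 hb, rfl⟩
    · have hF' : ∀ l ∈ interlacers k, ∀ a ∈ F l, IsMTOver n l a := fun l hl a ha =>
        (hF l (hlen l hl) ((hmem l).1 hl).isChain a).1 ha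
      rw [Finset.card_biUnion, alphaList, interlacingSum_eq_sum k hk₁ hk.tail, Nat.cast_sum]
      · refine Finset.sum_congr rfl fun l hl => ?_
        rw [Finset.card_image_of_injOn, hFcard l (hlen l hl) ((hmem l).1 hl).isChain]
        exact fun a ha b hb h => (hF' l hl a ha).appendRow_injective (hF' l hl b hb) h
      · intro l hl l' hl' hne
        rw [Function.onFun, Finset.disjoint_left]
        simp only [Finset.mem_image]
        rintro _ ⟨a, ha, rfl⟩ ⟨b, hb, h⟩
        have ha := hF' l hl a ha
        have hb := hF' l' hl' b hb
        rw [hb.appendRow_injective ha h] at hb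
        exact hne (ha.row_unique (hlen l hl) (hlen l' hl') hb)

lemma ncard_MTset_eq_alphaList {n : ℕ} (k : Fin n → ℤ) (hk : StrictMono k) :
    ((MTset n k).ncard : ℚ) = alphaList n (List.ofFn k) := by
  obtain ⟨F, hF, hcard⟩ := exists_finset_card_eq_alphaList n (List.ofFn k) (by simp)
    (List.isChain_iff_getElem.2 fun i hi => by
      simp only [List.getElem_ofFn]
      exact hk (Fin.mk_lt_mk.2 (Nat.lt_succ_self i)))
  have h : MTset n k = (F : Set (ℕ → ℕ → ℤ)) := by
    ext a
    rw [Finset.mem_coe, hF]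
    refine and_congr_right fun _ => ⟨fun h j hj => ?_, fun h j => ?_⟩
    · simpa [hj] using h ⟨j, hj⟩
    · simpa using h j j.2
  rw [h, Set.ncard_coe_finset, hcard]

/-- A function that is polynomial in each variable and vanishes on strictly increasing
integer sequences vanishes identically. -/
lemma eq_zero_of_forall_strictMono {n : ℕ} (D : (Fin n → ℤ) → ℚ)
    (hD : ∀ (k : Fin n → ℤ) (j : Fin n), ∃ Q : Polynomial ℚ, ∀ t : ℤ,
      D (Function.update k j t) = Q.eval (t : ℚ))
    (h : ∀ k, StrictMono k → D k = 0) (k : Fin n → ℤ) : D k = 0 := by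
  suffices H : ∀ j : ℕ, j ≤ n → ∀ k : Fin n → ℤ,
      (∀ a b : Fin n, a < b → b.1 < n - j → k a < k b) → D k = 0 from
    H n le_rfl k (by omega)
  intro j
  induction j with
  | zero => exact fun _ k hk => h k fun a b hab => hk a b hab (by omega)
  | succ j ih =>
    intro hj k hk
    let i : Fin n := ⟨n - (j + 1), by omega⟩
    obtain ⟨Q, hQ⟩ := hD k i
    obtain ⟨c, hc⟩ := (Set.finite_range k).bddAbove
    have hQ₀ : Q = 0 := by
      refine Polynomial.eq_zero_of_forall_intCast_ge (c + 1) fun t ht => ?_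
      rw [← hQ]
      refine ih (by omega) _ fun a b hab hb => ?_
      have ha : a ≠ i := by
        rintro rfl
        simp only [i, Fin.lt_def] at hab
        omega
      rw [Function.update_of_ne ha]
      by_cases hbi : b = i
      · rw [hbi, Function.update_self]
        have := hc (Set.mem_range_self a)
        omega
      · rw [Function.update_of_ne hbi]
        refine hk a b hab ?_
        have : b.1 ≠ n - (j + 1) := fun h => hbi (Fin.ext h)
        omega
    rw [← Function.update_eq_self i k, hQ, hQ₀, Polynomial.eval_zero]

lemma IsAlpha.eq_alphaList {n : ℕ} {α : (Fin n → ℤ) → ℚ} (hα : IsAlpha n α) (k : Fin n → ℤ) :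
    α k = alphaList n (List.ofFn k) := by
  obtain ⟨⟨P, -, hP⟩, hcount⟩ := hα
  refine sub_eq_zero.1 (eq_zero_of_forall_strictMono
    (fun k => α k - alphaList n (List.ofFn k)) (fun k j => ?_) (fun k hk => ?_) k)
  · obtain ⟨Q, hQ⟩ := (alphaList_isPolynomialOnLists n).exists_polynomial
      (List.ofFn (Function.update (fun i => Polynomial.C (k i)) j Polynomial.X))
    refine ⟨MvPolynomial.aeval
      (Function.update (fun i => Polynomial.C (k i : ℚ)) j Polynomial.X) P - Q, fun t => ?_⟩
    rw [Polynomial.eval_sub, ← hQ, hP, ← Polynomial.coe_evalRingHom (t : ℚ),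
      MvPolynomial.map_aeval, List.map_ofFn]
    have h₁ : (Polynomial.evalRingHom (t : ℚ)).comp (algebraMap ℚ (Polynomial ℚ)) =
        RingHom.id ℚ := by
      ext; simp
    rw [h₁, MvPolynomial.eval]
    congr 3
    · ext i
      rcases eq_or_ne i j with rfl | h <;> simp [*]
    · ext i
      rcases eq_or_ne i j with rfl | h <;> simp [*]
  · simp only [hcount k hk, ncard_MTset_eq_alphaList k hk, sub_self]

lemma List.ofFn_pair {n p : ℕ} (hp : p + 1 < n) (k : Fin n → ℤ) (x y : ℤ) :
    List.ofFn (fun j : Fin n => if j.1 = p then x else if j.1 = p + 1 then y else k j) =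
      (List.ofFn k).take p ++ x :: y :: (List.ofFn k).drop (p + 2) := by
  apply List.ext_getElem
  · simp
    omega
  · intro i h₁ h₂
    simp only [List.getElem_ofFn, List.getElem_append, List.length_take, List.length_ofFn,
      List.getElem_take, List.getElem_cons, List.getElem_drop,
      min_eq_left (show p ≤ n by omega)]
    split_ifs <;> first | omega | rfl | skip
    congr 2
    omega

/-- For every `n ≥ 2`, every (0-indexed) position `p` with `p + 1 < n`, and all
integers `k₁,…` and `m`:
`α(n; …, m, m+1, …) = α(n; …, m, m, …) + α(n; …, m+1, m+1, …)`,
where the displayed pair sits in positions `p, p+1` and the remaining entries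
are given by `k`. -/
theorem alpha_pair_identity (n : ℕ) (hn : 2 ≤ n) (p : ℕ) (hp : p + 1 < n)
    (α : (Fin n → ℤ) → ℚ) (hα : IsAlpha n α) (k : Fin n → ℤ) (m : ℤ) :
    α (fun j => if j.1 = p then m else if j.1 = p + 1 then m + 1 else k j) =
      α (fun j => if j.1 = p then m else if j.1 = p + 1 then m else k j) +
      α (fun j => if j.1 = p then m + 1 else if j.1 = p + 1 then m + 1 else k j) := by
  obtain ⟨n, rfl⟩ : ∃ t, n = t + 1 := ⟨n - 1, by omega⟩
  simp only [hα.eq_alphaList, List.ofFn_pair hp]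
  exact alphaList_succ_pairIdentity n _ _ m
end

section
/- For every n ≥ 2, every index 1 ≤ i ≤ n−1, and all integers k_1,…,k_{i−1}, m, k_{i+2},…,k_n, the set 𝒫(k_1,…,k_{i−1}, m, m+1, k_{i+2},…,k_n) of penultimate rows is the disjoint union of 𝒫(k_1,…,k_{i−1}, m, m, k_{i+2},…,k_n) and 𝒫(k_1,…,k_{i−1}, m+1, m+1, k_{i+2},…,k_n); moreover, each row (l_1,…,l_{n−1}) has the same total number of newcomers and sign-changing pairs with respect to the bottom row (k_1,…,k_{i−1}, m, m+1, k_{i+2},…,k_n) as with respect to the bottom row of the part of the union containing it. -/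
/-- `𝒫(k)`: the set of penultimate rows of Generalized Monotone Triangles of
size `m + 1` with bottom row `k`. -/
def PenSet (m : ℕ) (k : Fin (m + 1) → ℤ) : Set (Fin m → ℤ) :=
  {l | ∃ a, IsGMT (m + 1) a ∧ BottomRow (m + 1) a k ∧
    ∀ j : Fin m, a m (j.1 + 1) = l j}

/-- Extension of a finite row to `ℕ` (by `0`), for convenient indexing. -/
def rowExt {m : ℕ} (l : Fin m → ℤ) : ℕ → ℤ :=
  fun j => if h : j < m then l ⟨j, h⟩ else 0

/-- `sc(k; l)`: the total number of newcomers and sign-changing pairs in the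
two-row array with top row `l` (length `m`) and bottom row `k` (length `m+1`):
`l j` is a newcomer if `k j > l j > k (j+1)`, and a pair `(l j, l (j+1))` of
equal consecutive entries is sign-changing if `k (j+1) = l j`. -/
def sc2 (m : ℕ) (k : Fin (m + 1) → ℤ) (l : Fin m → ℤ) : ℕ :=
  ((Finset.range m).filter (fun j =>
    rowExt l j < rowExt k j ∧ rowExt k (j + 1) < rowExt l j)).card +
  ((Finset.range m).filter (fun j =>
    j + 1 < m ∧ rowExt l j = rowExt l (j + 1) ∧ rowExt k (j + 1) = rowExt l j)).card

/-- The Generalized Monotone Triangle conditions between a bottom row `K 0, …, K N` and the row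
`L 0, …, L (N - 1)` above it. -/
def TwoRow (N : ℕ) (K L : ℕ → ℤ) : Prop :=
  (∀ j < N, min (K j) (K (j + 1)) ≤ L j ∧ L j ≤ max (K j) (K (j + 1))) ∧
  (∀ j, j + 1 < N → K j ≤ K (j + 1) → K (j + 1) ≤ K (j + 2) → L j < L (j + 1)) ∧
  (∀ j < N, K (j + 1) < K j → L j = K j → 1 ≤ j ∧ L (j - 1) = L j) ∧
  (∀ j < N, K (j + 1) < K j → L j = K (j + 1) → j + 1 < N ∧ L (j + 1) = L j)

theorem rowExt_of_lt {N j : ℕ} (l : Fin N → ℤ) (h : j < N) : rowExt l j = l ⟨j, h⟩ :=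
  dif_pos h

theorem BottomRow.eq_rowExt {N : ℕ} {a : ℕ → ℕ → ℤ} {l : Fin N → ℤ} (h : BottomRow N a l)
    {j : ℕ} (hj : j < N) : a N (j + 1) = rowExt l j := by
  rw [rowExt_of_lt l hj]
  exact h ⟨j, hj⟩

/-- The conditions of a Generalized Monotone Triangle between its last two rows. -/
theorem IsGMT.twoRow {N : ℕ} {a : ℕ → ℕ → ℤ} (ha : IsGMT (N + 1) a) :
    TwoRow N (fun j => a (N + 1) (j + 1)) (fun j => a N (j + 1)) := by
  obtain ⟨-, h1, h2, h3⟩ := ha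
  refine ⟨fun j hj => h1 N (j + 1) (by omega) (by omega) le_rfl,
    fun j hj => h2 N (j + 1) (by omega) (by omega) le_rfl, fun j hj hd he => ?_,
    fun j hj hd he => ?_⟩
  · obtain ⟨hj1, hj2⟩ := (h3 N (j + 1) (by omega) (by omega) le_rfl).1 he hd
    refine ⟨by omega, ?_⟩
    have : j - 1 + 1 = j + 1 - 1 := by omega
    simpa only [this] using hj2
  · obtain ⟨hj1, hj2⟩ := (h3 N (j + 1) (by omega) (by omega) le_rfl).2 hd he.symm
    exact ⟨by omega, hj2⟩

theorem TwoRow.congr {N : ℕ} {K K' L L' : ℕ → ℤ} (h : TwoRow N K L)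
    (hK : ∀ j < N + 1, K j = K' j) (hL : ∀ j < N, L j = L' j) : TwoRow N K' L' := by
  obtain ⟨h1, h2, h3, h4⟩ := h
  refine ⟨fun j hj => ?_, fun j hj => ?_, fun j hj => ?_, fun j hj => ?_⟩
  · rw [← hK j (by omega), ← hK (j + 1) (by omega), ← hL j hj]
    exact h1 j hj
  · rw [← hK j (by omega), ← hK (j + 1) (by omega), ← hK (j + 2) (by omega),
      ← hL j (by omega), ← hL (j + 1) hj]
    exact h2 j hj
  · rw [← hK j (by omega), ← hK (j + 1) (by omega), ← hL j hj, ← hL (j - 1) (by omega)]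
    exact h3 j hj
  · intro hd he
    rw [← hK j (by omega), ← hK (j + 1) (by omega)] at hd
    rw [← hL j hj, ← hK (j + 1) (by omega)] at he
    obtain ⟨hj1, hj2⟩ := h4 j hj hd he
    exact ⟨hj1, by rw [← hL j hj, ← hL (j + 1) hj1, hj2]⟩

/-- Deleting the bottom row of a Generalized Monotone Triangle. -/
theorem IsGMT.deleteRow {N : ℕ} {a : ℕ → ℕ → ℤ} (ha : IsGMT (N + 1) a) :
    IsGMT N (fun i j => if i ≤ N then a i j else 0) := by
  obtain ⟨h0, h1, h2, h3⟩ := ha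
  refine ⟨fun i j h => ?_, fun i j hj hi hn => ?_, fun i j hj hi hn => ?_,
    fun i j hj hi hn => ?_⟩
  · by_cases hi : i ≤ N
    · simpa only [hi, if_true] using h0 i j (by omega)
    · simp only [hi, if_false]
  all_goals simp only [hn, Nat.le_of_succ_le hn, if_true]
  · exact h1 i j hj hi (by omega)
  · exact h2 i j hj hi (by omega)
  · exact h3 i j hj hi (by omega)

/-- Appending a bottom row to a Generalized Monotone Triangle. -/
theorem IsGMT.appendRow {N : ℕ} {a : ℕ → ℕ → ℤ} (ha : IsGMT N a) {K : ℕ → ℤ}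
    (h : TwoRow N K (fun j => a N (j + 1))) :
    IsGMT (N + 1) (fun i j => if i = N + 1 then
      if 1 ≤ j ∧ j ≤ N + 1 then K (j - 1) else 0 else a i j) := by
  obtain ⟨h0, h1, h2, h3⟩ := ha
  obtain ⟨g1, g2, g3, g4⟩ := h
  refine ⟨fun i j h => ?_, fun i j hj hi hn => ?_, fun i j hj hi hn => ?_,
    fun i j hj hi hn => ?_⟩
  · by_cases hi : i = N + 1
    · simp only [hi, if_true]
      exact if_neg (by omega)
    · simp only [hi, if_false]
      exact h0 i j (by omega)
  all_goals
    obtain ⟨j, rfl⟩ : ∃ q, j = q + 1 := ⟨j - 1, by omega⟩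
    have hi1 : i ≠ N + 1 := by omega
    by_cases hi2 : i + 1 = N + 1
  · obtain rfl : i = N := by omega
    simpa [hi, hi.trans (Nat.le_succ _)] using g1 j hi
  · simpa [hi1, show i ≠ N by omega] using h1 i (j + 1) hj hi (by omega)
  · obtain rfl : i = N := by omega
    have e1 : j ≤ i := by omega
    have e2 : j + 1 ≤ i := by omega
    have e3 : j + 1 + 1 ≤ i := by omega
    simpa [e1, e2, e3] using g2 j (by omega)
  · simpa [hi1, show i ≠ N by omega] using h2 i (j + 1) hj hi (by omega)
  · obtain rfl : i = N := by omega
    have e1 : j ≤ i := by omega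
    simp only [hi1, if_false, if_true, Nat.add_sub_cancel]
    rw [if_pos (by omega), if_pos (by omega)]
    refine ⟨fun he hd => ?_, fun hd he => ?_⟩
    · obtain ⟨q1, q2⟩ := g3 j hi hd he
      have : j - 1 + 1 = j := by omega
      exact ⟨by omega, by simpa only [this] using q2⟩
    · obtain ⟨q1, q2⟩ := g4 j hi hd he.symm
      exact ⟨by omega, q2⟩
  · simpa [hi1, show i ≠ N by omega] using h3 i (j + 1) hj hi (by omega)

/-- Whether `l` is a penultimate row over `k` splits into a condition on `l` alone and the
conditions between the two rows. -/
theorem mem_PenSet_iff {N : ℕ} {k : Fin (N + 1) → ℤ} {l : Fin N → ℤ} :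
    l ∈ PenSet N k ↔ (GMTset N l).Nonempty ∧ TwoRow N (rowExt k) (rowExt l) := by
  constructor
  · rintro ⟨a, ha, hk, hl⟩
    refine ⟨⟨_, ha.deleteRow, fun j => ?_⟩, ha.twoRow.congr (fun j hj => hk.eq_rowExt hj)
      (fun j hj => BottomRow.eq_rowExt hl hj)⟩
    simpa only [le_rfl, if_true] using hl j
  · rintro ⟨⟨a, ha, hl⟩, h⟩
    refine ⟨_, ha.appendRow (h.congr (fun _ _ => rfl) fun j hj => (hl.eq_rowExt hj).symm),
      fun j => ?_, fun j => ?_⟩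
    · simp [rowExt_of_lt k j.2, Nat.le_of_lt_succ j.2]
    · simpa using hl j

/-- The bottom row of a Generalized Monotone Triangle has no three equal consecutive entries. -/
theorem not_three_eq_of_nonempty {N : ℕ} {l : Fin N → ℤ} (h : (GMTset N l).Nonempty) (j : ℕ)
    (hj : j + 2 < N) (h1 : rowExt l j = rowExt l (j + 1)) :
    rowExt l (j + 1) ≠ rowExt l (j + 2) := by
  obtain ⟨a, ha, hl⟩ := h
  intro h2
  obtain ⟨N, rfl⟩ : ∃ M, N = M + 1 := ⟨N - 1, by omega⟩
  obtain ⟨g1, g2, -, -⟩ := ha.twoRow.congr (fun j hj => hl.eq_rowExt hj) (fun _ _ => rfl)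
  have b1 := g1 j (by omega)
  have b2 := g1 (j + 1) (by omega)
  have b3 := g2 j (by omega) h1.le h2.le
  rw [h1, min_self, max_self] at b1
  rw [show j + 1 + 1 = j + 2 from rfl, h2, min_self, max_self] at b2
  omega

/-- The number of newcomers and sign-changing pairs of `L` over `K`. -/
def scRow (N : ℕ) (K L : ℕ → ℤ) : ℕ :=
  ((Finset.range N).filter (fun j => L j < K j ∧ K (j + 1) < L j)).card +
  ((Finset.range N).filter (fun j => j + 1 < N ∧ L j = L (j + 1) ∧ K (j + 1) = L j)).card

section LocalChange

variable {N p : ℕ} {m : ℤ} {K K' L : ℕ → ℤ}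

/-- Over rows containing `m` at position `p`, replacing `(m, m + 1)` by `(m, m)` at positions
`p`, `p + 1` of the bottom row preserves the two-row conditions. -/
theorem twoRow_iff_left (hp : p < N)
    (hL : ∀ j, j + 2 < N → L j = L (j + 1) → L (j + 1) ≠ L (j + 2))
    (hK : ∀ j, j ≠ p → j ≠ p + 1 → K j = K' j) (h0 : K p = m) (h1 : K (p + 1) = m + 1)
    (h0' : K' p = m) (h1' : K' (p + 1) = m) (hm : L p = m) :
    TwoRow N K L ↔ TwoRow N K' L := by
  have hK2 := hK (p + 2) (by omega) (by omega)
  constructor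
  all_goals
    rintro ⟨g1, g2, g3, g4⟩
    have a1 := g1 (p + 1)
    have a2 := g2 p
    have a3 := g3 (p + 1)
    have a4 := g4 (p + 1)
    have a5 := hL p
    refine ⟨fun j hj => ?_, fun j hj => ?_, fun j hj => ?_, fun j hj => ?_⟩
    all_goals
      have b1 := hK j
      have b2 := hK (j + 1)
      have b3 := hK (j + 2)
      have c1 := g1 j
      have c2 := g2 j
      have c3 := g3 j
      have c4 := g4 j
      clear hK hL g1 g2 g3 g4
      rcases (by omega : j = p ∨ j = p + 1 ∨ j + 1 = p ∨ j + 2 = p ∨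
        (j ≠ p ∧ j ≠ p + 1 ∧ j + 1 ≠ p ∧ j + 2 ≠ p)) with h | h | h | h | h <;> grind

/-- Over rows containing `m + 1` at position `p`, replacing `(m, m + 1)` by `(m + 1, m + 1)` at
positions `p`, `p + 1` of the bottom row preserves the two-row conditions. -/
theorem twoRow_iff_right (hp : p < N)
    (hL : ∀ j, j + 2 < N → L j = L (j + 1) → L (j + 1) ≠ L (j + 2))
    (hK : ∀ j, j ≠ p → j ≠ p + 1 → K j = K' j) (h0 : K p = m) (h1 : K (p + 1) = m + 1)
    (h0' : K' p = m + 1) (h1' : K' (p + 1) = m + 1) (hm : L p = m + 1) :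
    TwoRow N K L ↔ TwoRow N K' L := by
  have hK2 : ∀ q, q + 1 = p → K q = K' q := fun q hq => hK q (by omega) (by omega)
  constructor
  all_goals
    rintro ⟨g1, g2, g3, g4⟩
    have a1 := g1 (p - 1)
    have a2 := g2 (p - 1)
    have a3 := g3 (p - 1)
    have a4 := g4 (p - 1)
    have a5 := hL (p - 2)
    refine ⟨fun j hj => ?_, fun j hj => ?_, fun j hj => ?_, fun j hj => ?_⟩
    all_goals
      have b1 := hK j
      have b2 := hK (j + 1)
      have b3 := hK (j + 2)
      have c1 := g1 j
      have c2 := g2 j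
      have c3 := g3 j
      have c4 := g4 j
      clear hK hL g1 g2 g3 g4
      rcases (by omega : j = p ∨ j = p + 1 ∨ j + 1 = p ∨ j + 2 = p ∨
        (j ≠ p ∧ j ≠ p + 1 ∧ j + 1 ≠ p ∧ j + 2 ≠ p)) with h | h | h | h | h <;> grind

/-- The row counts agree if one newcomer is traded for one sign-changing pair. -/
theorem scRow_eq_of_exchange {s t : ℕ} (hs : s < N) (ht : t < N)
    (hn : ∀ j < N, j ≠ s → (L j < K j ∧ K (j + 1) < L j ↔ L j < K' j ∧ K' (j + 1) < L j))
    (hq : ∀ j < N, j ≠ t → (j + 1 < N ∧ L j = L (j + 1) ∧ K (j + 1) = L j ↔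
      j + 1 < N ∧ L j = L (j + 1) ∧ K' (j + 1) = L j))
    (hns : L s < K s ∧ K (s + 1) < L s) (hns' : ¬ (L s < K' s ∧ K' (s + 1) < L s))
    (hqt : ¬ (t + 1 < N ∧ L t = L (t + 1) ∧ K (t + 1) = L t))
    (hqt' : t + 1 < N ∧ L t = L (t + 1) ∧ K' (t + 1) = L t) :
    scRow N K L = scRow N K' L := by
  unfold scRow
  have e1 : (Finset.range N).filter (fun j => L j < K j ∧ K (j + 1) < L j) =
      insert s ((Finset.range N).filter (fun j => L j < K' j ∧ K' (j + 1) < L j)) := by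
    ext j
    simp only [Finset.mem_filter, Finset.mem_range, Finset.mem_insert]
    by_cases hj : j = s
    · subst hj
      tauto
    · have := hn j
      tauto
  have e2 : (Finset.range N).filter
        (fun j => j + 1 < N ∧ L j = L (j + 1) ∧ K' (j + 1) = L j) =
      insert t ((Finset.range N).filter
        (fun j => j + 1 < N ∧ L j = L (j + 1) ∧ K (j + 1) = L j)) := by
    ext j
    simp only [Finset.mem_filter, Finset.mem_range, Finset.mem_insert]
    by_cases hj : j = t
    · subst hj
      tauto
    · have := hq j
      tauto
  rw [e1, e2, Finset.card_insert_of_notMem (by simp only [Finset.mem_filter]; tauto),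
    Finset.card_insert_of_notMem (by simp only [Finset.mem_filter]; tauto)]
  omega

theorem scRow_congr
    (hn : ∀ j < N, (L j < K j ∧ K (j + 1) < L j ↔ L j < K' j ∧ K' (j + 1) < L j))
    (hq : ∀ j < N, (j + 1 < N ∧ L j = L (j + 1) ∧ K (j + 1) = L j ↔
      j + 1 < N ∧ L j = L (j + 1) ∧ K' (j + 1) = L j)) :
    scRow N K L = scRow N K' L := by
  unfold scRow
  rw [Finset.filter_congr fun j hj => hn j (Finset.mem_range.1 hj),
    Finset.filter_congr fun j hj => hq j (Finset.mem_range.1 hj)]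

theorem scRow_eq_left (hp : p < N) (h : TwoRow N K' L)
    (hK : ∀ j, j ≠ p → j ≠ p + 1 → K j = K' j) (h0 : K p = m) (h1 : K (p + 1) = m + 1)
    (h0' : K' p = m) (h1' : K' (p + 1) = m) (hm : L p = m) :
    scRow N K L = scRow N K' L := by
  have hy := hK (p + 2) (by omega) (by omega)
  by_cases hc : p + 1 < N ∧ L (p + 1) = m
  · have hlt := h.2.1 p hc.1
    refine scRow_eq_of_exchange hc.1 hp (fun j hj hjs => ?_) (fun j hj hjt => ?_)
      (by grind) (by grind) (by grind) (by grind)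
    all_goals
      have b1 := hK j
      have b2 := hK (j + 1)
      clear hK h
      by_cases j = p <;> by_cases j + 1 = p <;> grind
  · refine scRow_congr (fun j hj => ?_) (fun j hj => ?_)
    all_goals
      have b1 := hK j
      have b2 := hK (j + 1)
      clear hK h
      by_cases j = p <;> by_cases j + 1 = p <;> by_cases j = p + 1 <;> grind

theorem scRow_eq_right (hp : p < N) (h : TwoRow N K' L)
    (hK : ∀ j, j ≠ p → j ≠ p + 1 → K j = K' j) (h0 : K p = m) (h1 : K (p + 1) = m + 1)
    (h0' : K' p = m + 1) (h1' : K' (p + 1) = m + 1) (hm : L p = m + 1) :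
    scRow N K L = scRow N K' L := by
  by_cases hc : ∃ q, p = q + 1 ∧ L q = m + 1
  · obtain ⟨q, rfl, hq⟩ := hc
    have hx := hK q (by omega) (by omega)
    have hlt := h.2.1 q hp
    refine scRow_eq_of_exchange (s := q) (t := q) (by omega) (by omega) (fun j hj hjs => ?_)
      (fun j hj hjt => ?_) (by grind) (by grind) (by grind) (by grind)
    all_goals
      have b1 := hK j
      have b2 := hK (j + 1)
      clear hK h
      by_cases j = q + 1 <;> by_cases j = q + 2 <;> grind
  · have hc' : ∀ q, p = q + 1 → L q ≠ m + 1 := fun q h1 h2 => hc ⟨q, h1, h2⟩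
    refine scRow_congr (fun j hj => ?_) (fun j hj => ?_)
    all_goals
      have b1 := hK j
      have b2 := hK (j + 1)
      have b3 := hc' j
      clear hK h hc hc'
      by_cases j = p <;> by_cases j + 1 = p <;> by_cases j = p + 1 <;> grind

end LocalChange

/-- For `n = N + 1 ≥ 2`, every (0-indexed) position `p` with `p < N`, and all
integers `k₁,…` and `m`: the set of penultimate rows
`𝒫(…, m, m+1, …)` is the disjoint union of `𝒫(…, m, m, …)` and
`𝒫(…, m+1, m+1, …)`, and each row has the same total number of newcomers and
sign-changing pairs with respect to `(…, m, m+1, …)` as with respect to the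
bottom row of the part containing it. -/
theorem penSet_pair_identity (N : ℕ) (hN : 1 ≤ N) (p : ℕ) (hp : p < N)
    (k : Fin (N + 1) → ℤ) (m : ℤ) :
    (PenSet N (fun j => if j.1 = p then m else if j.1 = p + 1 then m + 1 else k j) =
      PenSet N (fun j => if j.1 = p then m else if j.1 = p + 1 then m else k j) ∪
      PenSet N (fun j => if j.1 = p then m + 1 else if j.1 = p + 1 then m + 1 else k j)) ∧
    Disjoint
      (PenSet N (fun j => if j.1 = p then m else if j.1 = p + 1 then m else k j))
      (PenSet N (fun j => if j.1 = p then m + 1 else if j.1 = p + 1 then m + 1 else k j)) ∧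
    (∀ l ∈ PenSet N (fun j => if j.1 = p then m else if j.1 = p + 1 then m else k j),
      sc2 N (fun j => if j.1 = p then m else if j.1 = p + 1 then m + 1 else k j) l =
        sc2 N (fun j => if j.1 = p then m else if j.1 = p + 1 then m else k j) l) ∧
    (∀ l ∈ PenSet N (fun j => if j.1 = p then m + 1 else if j.1 = p + 1 then m + 1 else k j),
      sc2 N (fun j => if j.1 = p then m else if j.1 = p + 1 then m + 1 else k j) l =
        sc2 N (fun j => if j.1 = p then m + 1 else if j.1 = p + 1 then m + 1 else k j) l) := by
  have he : ∀ (u v : ℤ) (j : ℕ), rowExt (fun j : Fin (N + 1) =>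
      if j.1 = p then u else if j.1 = p + 1 then v else k j) j =
      if j = p then u else if j = p + 1 then v else rowExt k j := by
    intro u v j
    by_cases hj : j < N + 1
    · simp only [rowExt_of_lt _ hj]
    · rw [if_neg (by omega), if_neg (by omega)]
      simp only [rowExt, dif_neg hj]
  have hoff : ∀ (u v u' v' : ℤ) (j : ℕ), j ≠ p → j ≠ p + 1 →
      rowExt (fun j : Fin (N + 1) =>
        if j.1 = p then u else if j.1 = p + 1 then v else k j) j =
      rowExt (fun j : Fin (N + 1) =>
        if j.1 = p then u' else if j.1 = p + 1 then v' else k j) j := by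
    intro u v u' v' j h1 h2
    rw [he, he, if_neg h1, if_neg h1, if_neg h2, if_neg h2]
  have hp0 : ∀ u v : ℤ, rowExt (fun j : Fin (N + 1) =>
      if j.1 = p then u else if j.1 = p + 1 then v else k j) p = u := by
    intro u v
    rw [he, if_pos rfl]
  have hp1 : ∀ u v : ℤ, rowExt (fun j : Fin (N + 1) =>
      if j.1 = p then u else if j.1 = p + 1 then v else k j) (p + 1) = v := by
    intro u v
    rw [he, if_neg (by omega), if_pos rfl]
  have hl : ∀ (u v : ℤ) (l : Fin N → ℤ), l ∈ PenSet N (fun j =>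
      if j.1 = p then u else if j.1 = p + 1 then v else k j) →
      min u v ≤ rowExt l p ∧ rowExt l p ≤ max u v := by
    intro u v l h
    simpa only [hp0, hp1] using (mem_PenSet_iff.1 h).2.1 p hp
  have hleft : ∀ l : Fin N → ℤ, rowExt l p = m →
      (l ∈ PenSet N (fun j => if j.1 = p then m else if j.1 = p + 1 then m + 1 else k j) ↔
        l ∈ PenSet N (fun j => if j.1 = p then m else if j.1 = p + 1 then m else k j)) := by
    intro l hlm
    rw [mem_PenSet_iff, mem_PenSet_iff]
    exact and_congr_right fun h => twoRow_iff_left hp (not_three_eq_of_nonempty h)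
      (hoff _ _ _ _) (hp0 _ _) (hp1 _ _) (hp0 _ _) (hp1 _ _) hlm
  have hright : ∀ l : Fin N → ℤ, rowExt l p = m + 1 →
      (l ∈ PenSet N (fun j => if j.1 = p then m else if j.1 = p + 1 then m + 1 else k j) ↔
        l ∈ PenSet N
          (fun j => if j.1 = p then m + 1 else if j.1 = p + 1 then m + 1 else k j)) := by
    intro l hlm
    rw [mem_PenSet_iff, mem_PenSet_iff]
    exact and_congr_right fun h => twoRow_iff_right hp (not_three_eq_of_nonempty h)
      (hoff _ _ _ _) (hp0 _ _) (hp1 _ _) (hp0 _ _) (hp1 _ _) hlm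
  have hlm : ∀ l ∈ PenSet N (fun j => if j.1 = p then m else if j.1 = p + 1 then m else k j),
      rowExt l p = m := by
    intro l h
    have := hl _ _ l h
    omega
  have hlm1 : ∀ l ∈ PenSet N
      (fun j => if j.1 = p then m + 1 else if j.1 = p + 1 then m + 1 else k j),
      rowExt l p = m + 1 := by
    intro l h
    have := hl _ _ l h
    omega
  refine ⟨?_, ?_, fun l h => ?_, fun l h => ?_⟩
  · ext l
    constructor
    · intro h
      have hb := hl _ _ l h
      rcases (by omega : rowExt l p = m ∨ rowExt l p = m + 1) with hm | hm
      · exact Or.inl ((hleft l hm).1 h)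
      · exact Or.inr ((hright l hm).1 h)
    · rintro (h | h)
      · exact (hleft l (hlm l h)).2 h
      · exact (hright l (hlm1 l h)).2 h
  · refine Set.disjoint_left.2 fun l h h' => ?_
    have h1 := hlm l h
    have h2 := hlm1 l h'
    omega
  · exact scRow_eq_left hp (mem_PenSet_iff.1 h).2 (hoff _ _ _ _) (hp0 _ _) (hp1 _ _)
      (hp0 _ _) (hp1 _ _) (hlm l h)
  · exact scRow_eq_right hp (mem_PenSet_iff.1 h).2 (hoff _ _ _ _) (hp0 _ _) (hp1 _ _)
      (hp0 _ _) (hp1 _ _) (hlm1 l h)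
end
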